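/- Let (f_N)_{N∈ℕ} be probability measures on ℝ² whose Fourier transforms can be written as f̂_N(ξ_1,ξ_2) = F_N(ξ)·exp(−(ξ_1²+ξ_2²)/2 − ξ_1ξ_2κ_N) for some functions F_N : ℝ² → ℂ and constants κ_N ∈ [0,1] satisfying κ := limsup_{N→∞} κ_N < 1. Let R > 0 and χ ∈ L¹(ℝ,ℝ) with supp(χ̂) ⊆ [−R,R]; let γ > 0 and γ_1 = γ_1(N), γ_2 = γ_2(N) be numbers with γ_1, γ_2 > γ, and set φ_j := (x ↦ e^{−γ_j x}·1{x ≥ 0}) ⋆ χ for j = 1,2. Then for any sequence of strictly positive finite numbers σ_N: limsup_{N→∞} | ∫_{ℝ²} σ_N² φ_1(σ_N u_1) φ_2(σ_N u_2) f_N(du) | ≤ (1/(2πγ²))·‖χ̂‖_∞²·(1−κ²)^{−1/2}·sup_{N≥1} ‖F_N‖_{∞,[−Rσ_N,Rσ_N]²}. -/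

import Mathlib

open MeasureTheory Filter Set
open scoped BigOperators Classical

noncomputable section

/-- The one-sided exponential is integrable with integral `1/a`. -/
lemma expcut_int {a : ℝ} (ha : 0 < a) :
    Integrable (fun y : ℝ => if 0 ≤ y then Real.exp (-(a * y)) else 0) ∧
    ∫ y : ℝ, (if 0 ≤ y then Real.exp (-(a * y)) else 0) = 1 / a := by
  have e : (fun y : ℝ => if 0 ≤ y then Real.exp (-(a * y)) else 0)
      = (Set.Ici (0:ℝ)).indicator (fun y => Real.exp (-a * y)) := by
    ext y; simp [Set.indicator]
  rw [e]
  constructor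
  · rw [integrable_indicator_iff measurableSet_Ici, integrableOn_Ici_iff_integrableOn_Ioi]
    exact integrableOn_exp_mul_Ioi (by linarith) 0
  · rw [integral_indicator measurableSet_Ici, integral_Ici_eq_integral_Ioi,
      integral_exp_mul_Ioi (by linarith)]
    simp

/-- Fourier representation of `φ`. -/
lemma phi_rep (χ : ℝ → ℝ) (hχ : Integrable χ) (R : ℝ)
    (hχhat : ∀ t : ℝ, R < |t| →
      (∫ x : ℝ, (χ x : ℂ) * Complex.exp (-(Complex.I * t * x))) = 0)
    (γ a : ℝ) (hγ : 0 < γ) (ha : γ < a)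
    (Mχ : ℝ) (hMχ : ∀ t : ℝ, ‖∫ x : ℝ, (χ x : ℂ) * Complex.exp (-(Complex.I * t * x))‖ ≤ Mχ) :
    ∃ H : ℝ → ℂ, Continuous H ∧ Integrable H ∧ (∀ w, ‖H w‖ ≤ Mχ / γ) ∧
      (∀ w, R < |2 * Real.pi * w| → H w = 0) ∧
      ∀ x : ℝ, ((∫ y : ℝ, (if 0 ≤ y then Real.exp (-(a * y)) else 0) * χ (x - y) : ℝ) : ℂ)
        = ∫ w : ℝ, Complex.exp (Complex.I * (2 * Real.pi * w * x : ℝ)) * H w := by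
  open FourierTransform Convolution in
  set g : ℝ → ℝ := fun y => if 0 ≤ y then Real.exp (-(a * y)) else 0 with hg
  have ha0 : 0 < a := hγ.trans ha
  obtain ⟨gi, gI⟩ := expcut_int ha0
  rw [← hg] at gi gI
  have hM0 : 0 ≤ Mχ := (norm_nonneg _).trans (hMχ 0)
  set gc : ℝ → ℂ := fun y => (g y : ℂ) with hgc
  set χc : ℝ → ℂ := fun y => (χ y : ℂ) with hχc
  have gci : Integrable gc := gi.ofReal
  have χci : Integrable χc := hχ.ofReal
  have hFχ : ∀ w : ℝ, 𝓕 χc w = ∫ x : ℝ, (χ x : ℂ) *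
      Complex.exp (-(Complex.I * ((2 * Real.pi * w : ℝ) : ℂ) * x)) := by
    intro w
    rw [Real.fourier_real_eq_integral_exp_smul]
    congr 1; ext x
    rw [smul_eq_mul, mul_comm]
    congr 2
    push_cast; ring
  have hFg : ∀ w : ℝ, ‖𝓕 gc w‖ ≤ 1 / γ := by
    intro w
    rw [Real.fourier_real_eq]
    refine (norm_integral_le_integral_norm _).trans ?_
    have : (fun v : ℝ => ‖Real.fourierChar (-(v * w)) • gc v‖) = g := by
      ext v
      rw [Circle.norm_smul]
      simp only [hgc, Complex.norm_real, Real.norm_eq_abs]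
      apply abs_of_nonneg
      simp only [hg]; split_ifs <;> positivity
    rw [this, gI]
    exact one_div_le_one_div_of_le hγ ha.le
  set φ : ℝ → ℂ := gc ⋆[ContinuousLinearMap.mul ℂ ℂ] χc with hφ
  have φi : Integrable φ := gci.integrable_convolution _ χci
  have hFφ : ∀ w, 𝓕 φ w = 𝓕 gc w * 𝓕 χc w := fun w =>
    Real.fourier_mul_convolution_eq gci χci w
  have hcont : Continuous (𝓕 φ) :=
    VectorFourier.fourierIntegral_continuous Real.continuous_fourierChar
      (by exact continuous_inner) φi
  have hbd : ∀ w, ‖𝓕 φ w‖ ≤ Mχ / γ := by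
    intro w
    rw [hFφ, norm_mul, div_eq_mul_one_div, mul_comm Mχ]
    refine mul_le_mul (hFg w) ?_ (norm_nonneg _) (by positivity)
    rw [hFχ]; exact hMχ _
  have hz : ∀ w, R < |2 * Real.pi * w| → 𝓕 φ w = 0 := by
    intro w hw
    rw [hFφ, hFχ, hχhat _ hw, mul_zero]
  have Hi : Integrable (𝓕 φ) := by
    refine hcont.integrable_of_hasCompactSupport ?_
    refine HasCompactSupport.intro (isCompact_Icc (a := -(R / (2 * Real.pi)))
      (b := R / (2 * Real.pi))) ?_
    intro w hw
    apply hz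
    by_contra h
    apply hw
    push Not at h
    have hp : 0 < 2 * Real.pi := by positivity
    rw [abs_mul, abs_of_pos hp, mul_comm, ← le_div_iff₀ hp, abs_le] at h
    exact h
  have φe : ∀ x, φ x = ∫ y, (g (x - y) : ℂ) * χ y := by
    intro x
    rw [hφ, convolution_mul_swap]
  have φc : Continuous φ := by
    rw [continuous_iff_continuousAt]
    intro x
    rw [show φ = fun x => ∫ y, (g (x - y) : ℂ) * χ y from funext φe]
    refine continuousAt_of_dominated (bound := fun y => |χ y|) ?_ ?_ hχ.abs ?_
    · refine Eventually.of_forall fun x' => ?_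
      exact ((gi.comp_sub_left x').ofReal (𝕜 := ℂ)).aestronglyMeasurable.mul χci.aestronglyMeasurable
    · refine Eventually.of_forall fun x' => Eventually.of_forall fun y => ?_
      rw [norm_mul, Complex.norm_real, Complex.norm_real, Real.norm_eq_abs, Real.norm_eq_abs]
      refine mul_le_of_le_one_left (abs_nonneg _) ?_
      simp only [hg]
      split_ifs with h
      · rw [abs_of_pos (Real.exp_pos _), Real.exp_le_one_iff]
        have := mul_nonneg ha0.le h
        linarith
      · simp
    · have : ∀ᵐ y : ℝ, y ≠ x := by simp [ae_iff]
      filter_upwards [this] with y hy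
      refine ContinuousAt.mul ?_ continuousAt_const
      refine Complex.continuous_ofReal.continuousAt.comp ?_
      rcases lt_or_gt_of_ne hy with h | h
      · have : (fun x' => g (x' - y)) =ᶠ[nhds x] fun x' => Real.exp (-(a * (x' - y))) := by
          filter_upwards [lt_mem_nhds h] with x' hx'
          simp only [hg]; rw [if_pos (by linarith)]
        refine ContinuousAt.congr ?_ this.symm
        fun_prop
      · have : (fun x' => g (x' - y)) =ᶠ[nhds x] fun x' => 0 := by
          filter_upwards [gt_mem_nhds h] with x' hx'
          simp only [hg]; rw [if_neg (by linarith)]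
        refine ContinuousAt.congr ?_ this.symm
        fun_prop
  have inv := φc.fourierInv_fourier_eq φi Hi
  refine ⟨𝓕 φ, hcont, Hi, hbd, hz, fun x => ?_⟩
  have h1 : ((∫ y : ℝ, g y * χ (x - y) : ℝ) : ℂ) = φ x := by
    rw [hφ, ← integral_complex_ofReal]
    simp [convolution, hgc, hχc]
  rw [h1]
  conv_lhs => rw [← inv]
  rw [Real.fourierInv_eq']
  congr 1; ext w
  rw [smul_eq_mul]
  congr 2
  simp
  ring

/-- The 2D Gaussian. -/
lemma gauss2 (c k : ℝ) (hc : 0 < c) (hk0 : 0 ≤ k) (hk : k < 1) :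
    Integrable (fun p : ℝ × ℝ =>
      Real.exp (-(((c * p.1) ^ 2 + (c * p.2) ^ 2) / 2 + (c * p.1) * (c * p.2) * k))) ∧
    ∫ p : ℝ × ℝ, Real.exp (-(((c * p.1) ^ 2 + (c * p.2) ^ 2) / 2 + (c * p.1) * (c * p.2) * k))
      = 2 * Real.pi / (c ^ 2 * Real.sqrt (1 - k ^ 2)) := by
  have hint : Integrable (fun p : ℝ × ℝ =>
      Real.exp (-(((c * p.1) ^ 2 + (c * p.2) ^ 2) / 2 + (c * p.1) * (c * p.2) * k))) := by
    have hb : 0 < (1 - k) * c ^ 2 / 2 := by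
      have : 0 < 1 - k := by linarith
      positivity
    have h := (integrable_exp_neg_mul_sq hb).mul_prod (integrable_exp_neg_mul_sq hb)
    refine h.mono' (by fun_prop) (Eventually.of_forall fun p => ?_)
    rw [Real.norm_eq_abs, abs_of_pos (Real.exp_pos _), ← Real.exp_add, Real.exp_le_exp]
    nlinarith [mul_nonneg hk0 (sq_nonneg (c * p.1 + c * p.2))]
  refine ⟨hint, ?_⟩
  have h1 : 0 < 1 - k ^ 2 := by nlinarith
  rw [Measure.volume_eq_prod] at hint ⊢
  rw [integral_prod_symm _ hint]
  have inner : ∀ s : ℝ, ∫ t : ℝ,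
      Real.exp (-(((c * t) ^ 2 + (c * s) ^ 2) / 2 + (c * t) * (c * s) * k))
      = Real.sqrt (Real.pi / (c ^ 2 / 2)) * Real.exp (-((1 - k ^ 2) * c ^ 2 / 2) * s ^ 2) := by
    intro s
    rw [← integral_gaussian, ← integral_add_right_eq_self _ (-(k * s)), ← integral_mul_const]
    congr 1; ext t
    rw [← Real.exp_add]
    congr 1; ring
  simp only [inner]
  rw [integral_const_mul, integral_gaussian, ← Real.sqrt_mul (by positivity)]
  rw [Real.sqrt_eq_iff_mul_self_eq (by positivity) (by positivity)]
  have := Real.mul_self_sqrt h1.le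
  field_simp
  rw [Real.sq_sqrt h1.le]

/-- The bound for one fixed measure. -/
lemma one_bound (μ : Measure (ℝ × ℝ)) [IsProbabilityMeasure μ]
    (F : ℝ × ℝ → ℂ) (k : ℝ) (hk0 : 0 ≤ k) (hk1 : k < 1)
    (hFourier : ∀ ξ₁ ξ₂ : ℝ,
      (∫ u, Complex.exp (-(Complex.I * (ξ₁ * u.1 + ξ₂ * u.2))) ∂μ)
        = F (ξ₁, ξ₂) *
          Complex.exp (-(((ξ₁ ^ 2 + ξ₂ ^ 2) / 2 + ξ₁ * ξ₂ * k : ℝ) : ℂ)))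
    (R s B MF : ℝ) (hs : 0 < s) (hB : 0 ≤ B)
    (hMF : ∀ ξ₁ ξ₂ : ℝ, |ξ₁| ≤ R * s → |ξ₂| ≤ R * s → ‖F (ξ₁, ξ₂)‖ ≤ MF) (hMF0 : 0 ≤ MF)
    (φ₁ φ₂ : ℝ → ℝ) (H₁ H₂ : ℝ → ℂ) (hc₁ : Continuous H₁) (hc₂ : Continuous H₂)
    (hi₁ : Integrable H₁) (hi₂ : Integrable H₂)
    (hb₁ : ∀ w, ‖H₁ w‖ ≤ B) (hb₂ : ∀ w, ‖H₂ w‖ ≤ B)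
    (hz₁ : ∀ w, R < |2 * Real.pi * w| → H₁ w = 0)
    (hz₂ : ∀ w, R < |2 * Real.pi * w| → H₂ w = 0)
    (hr₁ : ∀ x : ℝ, (φ₁ x : ℂ) = ∫ w : ℝ, Complex.exp (Complex.I * (2 * Real.pi * w * x : ℝ)) * H₁ w)
    (hr₂ : ∀ x : ℝ, (φ₂ x : ℂ) = ∫ w : ℝ, Complex.exp (Complex.I * (2 * Real.pi * w * x : ℝ)) * H₂ w) :
    |∫ u, s ^ 2 * φ₁ (s * u.1) * φ₂ (s * u.2) ∂μ| ≤
      B ^ 2 * MF * (1 / (2 * Real.pi * Real.sqrt (1 - k ^ 2))) := by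
  set c : ℝ := 2 * Real.pi * s with hcdef
  have hc : 0 < c := by positivity
  obtain ⟨gi, gI⟩ := gauss2 c k hc hk0 hk1
  set G : ℝ × ℝ → ℝ := fun p =>
      Real.exp (-(((c * p.1) ^ 2 + (c * p.2) ^ 2) / 2 + (c * p.1) * (c * p.2) * k)) with hG
  have hprod : ∀ u : ℝ × ℝ, ((s ^ 2 * φ₁ (s * u.1) * φ₂ (s * u.2) : ℝ) : ℂ)
      = ∫ p : ℝ × ℝ, (s : ℂ) ^ 2 * (H₁ p.1 * H₂ p.2) *
        Complex.exp (Complex.I * (c * p.1 * u.1 + c * p.2 * u.2 : ℝ)) := by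
    intro u
    push_cast
    rw [hr₁, hr₂, mul_assoc, ← integral_prod_mul, ← integral_const_mul]
    rw [← Measure.volume_eq_prod]
    congr 1; ext p
    rw [show Complex.I * ((c : ℂ) * p.1 * u.1 + c * p.2 * u.2)
      = Complex.I * ((2 * Real.pi * p.1 * (s * u.1) : ℝ) : ℂ) +
        Complex.I * ((2 * Real.pi * p.2 * (s * u.2) : ℝ) : ℂ) by
          rw [hcdef]; push_cast; ring, Complex.exp_add]
    ring
  have hHi : Integrable (fun p : ℝ × ℝ => H₁ p.1 * H₂ p.2) := hi₁.mul_prod hi₂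
  have hswap : ((∫ u, s ^ 2 * φ₁ (s * u.1) * φ₂ (s * u.2) ∂μ : ℝ) : ℂ)
      = ∫ p : ℝ × ℝ, (s : ℂ) ^ 2 * (H₁ p.1 * H₂ p.2) *
        (F (-(c * p.1), -(c * p.2)) * (G p : ℂ)) := by
    rw [← integral_complex_ofReal]
    simp only [hprod]
    rw [integral_integral_swap]
    · congr 1; ext p
      rw [integral_const_mul]
      congr 1
      have := hFourier (-(c * p.1)) (-(c * p.2))
      rw [show (G p : ℂ) = Complex.exp (-((((-(c * p.1)) ^ 2 + (-(c * p.2)) ^ 2) / 2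
        + (-(c * p.1)) * (-(c * p.2)) * k : ℝ) : ℂ)) by
          rw [hG]; push_cast; congr 1; ring, ← this]
      congr 1; ext u; congr 1; push_cast; ring
    · have h2 := (integrable_const (μ := μ) (1:ℂ)).mul_prod (hHi.const_mul ((s:ℂ)^2))
      refine h2.mono ?_ (Eventually.of_forall fun q => ?_)
      · apply Continuous.aestronglyMeasurable
        simp only [Function.uncurry_def]
        fun_prop
      · simp only [Function.uncurry_def, norm_mul, one_mul]
        rw [mul_comm Complex.I, Complex.norm_exp_ofReal_mul_I, mul_one]
  rw [← Real.norm_eq_abs, ← Complex.norm_real, hswap]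
  have hbound : ∀ p : ℝ × ℝ, ‖(s : ℂ) ^ 2 * (H₁ p.1 * H₂ p.2) *
        (F (-(c * p.1), -(c * p.2)) * (G p : ℂ))‖ ≤ (s ^ 2 * B ^ 2 * MF) * G p := by
    intro p
    have hGp : 0 ≤ G p := (Real.exp_pos _).le
    have key : ∀ w : ℝ, ¬ (R < |2 * Real.pi * w|) → |-(c * w)| ≤ R * s := by
      intro w hw
      push Not at hw
      rw [abs_neg, hcdef, show 2 * Real.pi * s * w = (2 * Real.pi * w) * s by ring, abs_mul,
        abs_of_pos hs]
      gcongr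
    by_cases h1 : R < |2 * Real.pi * p.1|
    · rw [hz₁ _ h1]; simp; positivity
    by_cases h2 : R < |2 * Real.pi * p.2|
    · rw [hz₂ _ h2]; simp; positivity
    have hF := hMF _ _ (key _ h1) (key _ h2)
    simp only [norm_mul, norm_pow, Complex.norm_real, Real.norm_eq_abs, abs_of_pos hs,
      abs_of_nonneg hGp]
    calc s ^ 2 * (‖H₁ p.1‖ * ‖H₂ p.2‖) * (‖F (-(c * p.1), -(c * p.2))‖ * G p)
        ≤ s ^ 2 * (B * B) * (MF * G p) := by
          gcongr
          · exact hb₁ _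
          · exact hb₂ _
      _ = _ := by ring
  refine (norm_integral_le_of_norm_le (gi.const_mul _) (Eventually.of_forall hbound)).trans ?_
  rw [integral_const_mul, gI, hcdef]
  apply le_of_eq
  have : 0 < Real.sqrt (1 - k ^ 2) := Real.sqrt_pos.mpr (by nlinarith)
  field_simp

/-- Lemma `lem:fzero`: a Fourier-analytic bound. For probability measures
`f_N` on `ℝ²` whose Fourier transforms factor as `F_N(ξ) exp(-(ξ₁²+ξ₂²)/2 - ξ₁ξ₂κ_N)`, a
compactly band-limited mollifier `χ`, exponential cutoffs `φ_j = (e^{-γ_j·}1_{ℝ₊}) ⋆ χ`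
and any positive scales `σ_N`, the rescaled integrals satisfy the stated limsup bound,
where the sup norms of `χ̂` and of `F_N` on `[-Rσ_N, Rσ_N]²` are encoded by the bounds
`Mχ` and `MF`. -/
theorem statement5
    (μ : ℕ → Measure (ℝ × ℝ)) (hμ : ∀ N, IsProbabilityMeasure (μ N))
    (F : ℕ → ℝ × ℝ → ℂ) (κ : ℕ → ℝ) (hκmem : ∀ N, κ N ∈ Set.Icc (0:ℝ) 1)
    (hFourier : ∀ N : ℕ, ∀ ξ₁ ξ₂ : ℝ,
      (∫ u, Complex.exp (-(Complex.I * (ξ₁ * u.1 + ξ₂ * u.2))) ∂(μ N))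
        = F N (ξ₁, ξ₂) *
          Complex.exp (-(((ξ₁ ^ 2 + ξ₂ ^ 2) / 2 + ξ₁ * ξ₂ * κ N : ℝ) : ℂ)))
    (κlim : ℝ) (hκlim : κlim = Filter.limsup κ atTop) (hκlt : κlim < 1)
    (R : ℝ) (hR : 0 < R)
    (χ : ℝ → ℝ) (hχ : Integrable χ)
    (hχhat : ∀ t : ℝ, R < |t| →
      (∫ x : ℝ, (χ x : ℂ) * Complex.exp (-(Complex.I * t * x))) = 0)
    (γ : ℝ) (hγ : 0 < γ) (γ₁ γ₂ : ℕ → ℝ) (hγ₁ : ∀ N, γ < γ₁ N) (hγ₂ : ∀ N, γ < γ₂ N)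
    (σ : ℕ → ℝ) (hσ : ∀ N, 0 < σ N)
    (Mχ : ℝ) (hMχ : ∀ t : ℝ, ‖∫ x : ℝ, (χ x : ℂ) * Complex.exp (-(Complex.I * t * x))‖ ≤ Mχ)
    (MF : ℝ) (hMF : ∀ N : ℕ, 1 ≤ N → ∀ ξ₁ ξ₂ : ℝ,
      |ξ₁| ≤ R * σ N → |ξ₂| ≤ R * σ N → ‖F N (ξ₁, ξ₂)‖ ≤ MF) :
    Filter.limsup (fun N : ℕ =>
        |∫ u, σ N ^ 2 *
            (∫ y : ℝ, (if 0 ≤ y then Real.exp (-(γ₁ N * y)) else 0) * χ (σ N * u.1 - y)) *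
            (∫ y : ℝ, (if 0 ≤ y then Real.exp (-(γ₂ N * y)) else 0) * χ (σ N * u.2 - y))
          ∂(μ N)|) atTop
      ≤ 1 / (2 * Real.pi * γ ^ 2) * Mχ ^ 2 * (1 / Real.sqrt (1 - κlim ^ 2)) * MF := by
  have hM0 : 0 ≤ Mχ := (norm_nonneg _).trans (hMχ 0)
  have hMF0 : 0 ≤ MF := (norm_nonneg _).trans
    (hMF 1 le_rfl 0 0 (by simpa using (mul_pos hR (hσ 1)).le)
      (by simpa using (mul_pos hR (hσ 1)).le))
  have hbdd : IsBoundedUnder (· ≤ ·) atTop κ :=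
    isBoundedUnder_of ⟨1, fun N => (hκmem N).2⟩
  have hk0 : 0 ≤ κlim := by
    rw [hκlim]
    exact le_limsup_of_frequently_le (Frequently.of_forall fun N => (hκmem N).1) hbdd
  have step : ∀ k' : ℝ, κlim < k' → k' < 1 →
      Filter.limsup (fun N : ℕ =>
        |∫ u, σ N ^ 2 *
            (∫ y : ℝ, (if 0 ≤ y then Real.exp (-(γ₁ N * y)) else 0) * χ (σ N * u.1 - y)) *
            (∫ y : ℝ, (if 0 ≤ y then Real.exp (-(γ₂ N * y)) else 0) * χ (σ N * u.2 - y))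
          ∂(μ N)|) atTop
      ≤ 1 / (2 * Real.pi * γ ^ 2) * Mχ ^ 2 * (1 / Real.sqrt (1 - k' ^ 2)) * MF := by
    intro k' h1 h2
    have hev : ∀ᶠ N in atTop, κ N < k' :=
      eventually_lt_of_limsup_lt (hκlim ▸ h1) hbdd
    refine limsup_le_of_le (isCoboundedUnder_le_of_le atTop (x := 0) fun N => abs_nonneg _) ?_
    filter_upwards [hev, eventually_ge_atTop 1] with N hN hN1
    have := hμ N
    obtain ⟨H₁, c₁, i₁, b₁, z₁, r₁⟩ := phi_rep χ hχ R hχhat γ (γ₁ N) hγ (hγ₁ N) Mχ hMχ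
    obtain ⟨H₂, c₂, i₂, b₂, z₂, r₂⟩ := phi_rep χ hχ R hχhat γ (γ₂ N) hγ (hγ₂ N) Mχ hMχ
    refine (one_bound (μ N) (F N) (κ N) (hκmem N).1 (hN.trans h2) (hFourier N) R (σ N) (Mχ / γ) MF
      (hσ N) (by positivity) (hMF N hN1) hMF0
      (fun x => ∫ y : ℝ, (if 0 ≤ y then Real.exp (-(γ₁ N * y)) else 0) * χ (x - y))
      (fun x => ∫ y : ℝ, (if 0 ≤ y then Real.exp (-(γ₂ N * y)) else 0) * χ (x - y))
      H₁ H₂ c₁ c₂ i₁ i₂ b₁ b₂ z₁ z₂ r₁ r₂).trans ?_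
    have hk'pos : 0 < 1 - k' ^ 2 := by nlinarith
    have hs : Real.sqrt (1 - k' ^ 2) ≤ Real.sqrt (1 - κ N ^ 2) := by
      apply Real.sqrt_le_sqrt
      nlinarith [(hκmem N).1]
    have hs0 : 0 < Real.sqrt (1 - k' ^ 2) := Real.sqrt_pos.mpr hk'pos
    calc (Mχ / γ) ^ 2 * MF * (1 / (2 * Real.pi * Real.sqrt (1 - κ N ^ 2)))
        ≤ (Mχ / γ) ^ 2 * MF * (1 / (2 * Real.pi * Real.sqrt (1 - k' ^ 2))) := by gcongr
      _ = _ := by field_simp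
  have hlimpos : 0 < 1 - κlim ^ 2 := by nlinarith
  have hs0 : Real.sqrt (1 - κlim ^ 2) ≠ 0 := (Real.sqrt_pos.mpr hlimpos).ne'
  have hcont : ContinuousAt (fun k' : ℝ =>
      1 / (2 * Real.pi * γ ^ 2) * Mχ ^ 2 * (1 / Real.sqrt (1 - k' ^ 2)) * MF) κlim := by
    have : ContinuousAt (fun k' : ℝ => 1 / Real.sqrt (1 - k' ^ 2)) κlim :=
      ContinuousAt.div continuousAt_const (by fun_prop) hs0
    exact (this.const_mul _).mul_const _
  have hT := hcont.tendsto.mono_left (nhdsWithin_le_nhds (s := Set.Ioi κlim))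
  refine ge_of_tendsto hT ?_
  filter_upwards [Ioo_mem_nhdsGT hκlt] with k' hk'
  exact step k' hk'.1 hk'.2

end
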